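/- For all v, w ∈ S_n, the following identity holds in the Laurent polynomial ring ℤ[t_1^{±1},…,t_n^{±1}]: Σ_{P ∈ FKPipes(w_0 w)} (−1)^{#P − ℓ(w_0 w)} ∏_{(i,j)∈P} (1 − t_{v(j)}/t_{n−i+1}) = Σ_{P ∈ Pipes(v, w_0 w)} (−1)^{#P − ℓ(w_0 w)} ∏_{(i,j)∈P} (1 − t_{v(j)}/t_{n−i+1}). (The left-hand side is the double Grothendieck polynomial 𝔊_{w_0 w}(x;y), given by the Fomin–Kirillov pipe dream formula, evaluated at x_j = t_{v(j)} and y_i = t_{n−i+1}.) -/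

import Mathlib

/-!
Let `π_l` be the operators of right Demazure multiplication by `s_l` on functions on `S_n`; they
generate a 0-Hecke algebra. Put `h_l(p) = 1 - (1 - p) π_l`. Both sides of the identity are, up to
the sign `(-1)^ℓ(w₀w)`, the same matrix coefficient of an ordered product of factors
`h_label(x_j / y_i)`, over the staircase and over `D(v)` respectively (`pipe_sum_eq`), where
`x_j = t_{v(j)}` and `y_i = t_{n-i+1}`. So it suffices that the two ordered products agree.

The factors satisfy `h_l(1) = 1`, `h_l(p) h_l(q) = h_l(pq)`, far commutation and the Yang–Baxter
equation (`hOp_YB`). Consequently two adjacent column variables `x_j, x_{j+1}` of a staircase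
product can be exchanged at the cost of one factor `h(x_{j+1} / x_j)` on the right (`stairL_swap`).
In the bottom row of the staircase, the column `c` with `x_c = y` carries the trivial factor
`h(1) = 1`. The factors to its left are exactly the bottom row of `D(v)`; those to its right commute
past them and are exactly what is needed to carry `x_c` out of the remaining, smaller staircase
(`stairL_step`). What is left is the staircase with column `c` deleted, and induction on the number
of rows produces `D(v)` with its canonical labels (`stairL_rothe`).
-/

open Equiv MvPolynomial

noncomputable section
open scoped Classical

variable {n : ℕ}

/-- The 0-based value of a permutation of `Fin n` on a natural number,
extended by the identity outside `{0, …, n-1}`. -/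
def permVal (v : Equiv.Perm (Fin n)) (j : ℕ) : ℕ :=
  if h : j < n then (v ⟨j, h⟩ : ℕ) else j

/-- The longest element `w₀` of the symmetric group, `w₀(i) = n + 1 - i` (1-based). -/
def longest : Equiv.Perm (Fin n) :=
  ⟨Fin.rev, Fin.rev, Fin.rev_rev, Fin.rev_rev⟩

/-- The Rothe diagram of `v`, as a set of 0-based boxes `(i, j)` where `i` counts rows
from the bottom and `j` columns from the left.  In 1-based terms this is
`{(i,j) : i < n - v(j) + 1 and j < v⁻¹(n - i + 1)}`. -/
def Rothe (v : Equiv.Perm (Fin n)) : Finset (ℕ × ℕ) :=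
  (Finset.range n ×ˢ Finset.range n).filter
    (fun p => p.1 + permVal v p.2 + 1 < n ∧ p.2 < permVal v.symm (n - 1 - p.1))

/-- The rank matrix `r^w_{ij} = #{k ≤ j : w(k) ≥ n - i + 1}` (translated to 0-based `i`, `j`). -/
def rankMat (w : Equiv.Perm (Fin n)) (i j : ℕ) : ℕ :=
  ((Finset.range n).filter (fun t => t ≤ j ∧ n ≤ permVal w t + i + 1)).card

/-- Bruhat order via rank matrices. -/
def bruhatLE (u w : Equiv.Perm (Fin n)) : Prop :=
  ∀ i j : ℕ, rankMat u i j ≤ rankMat w i j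

/-- The essential set of `w`. -/
def essentialSet (w : Equiv.Perm (Fin n)) : Finset (ℕ × ℕ) :=
  (Rothe w).filter (fun p => (p.1 + 1, p.2) ∉ Rothe w ∧ (p.1, p.2 + 1) ∉ Rothe w)

/-- The number of inversions (Coxeter length) of a permutation. -/
def invCount (u : Equiv.Perm (Fin n)) : ℕ :=
  ((Finset.univ : Finset (Fin n × Fin n)).filter
    (fun p => p.1 < p.2 ∧ u p.2 < u p.1)).card

/-- The adjacent transposition `s_l` (`l` 1-based) swapping `l` and `l+1`;
the identity if `l` is out of range. -/
def adjSwap {n : ℕ} (l : ℕ) : Equiv.Perm (Fin n) :=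
  if h : 1 ≤ l ∧ l < n then Equiv.swap ⟨l - 1, by omega⟩ ⟨l, h.2⟩ else 1

/-- The canonical (1-based) label of a box of `D(v)`: the `t`-th box from the left in
(1-based) row `i` gets label `i + t - 1`. -/
def canonLabel (v : Equiv.Perm (Fin n)) (b : ℕ × ℕ) : ℕ :=
  b.1 + ((Rothe v).filter (fun b' => b'.1 = b.1 ∧ b'.2 ≤ b.2)).card

/-- The boxes of `P` listed in reading order: rows from top (largest row index) to bottom,
left to right within each row. -/
def readingList (n : ℕ) (P : Finset (ℕ × ℕ)) : List (ℕ × ℕ) :=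
  ((List.range n).reverse).flatMap
    (fun i => ((List.range n).filter (fun j => decide ((i, j) ∈ P))).map (fun j => (i, j)))

/-- One step of the Demazure product: multiply by `s_ℓ` if that increases length. -/
def demStep (v : Equiv.Perm (Fin n)) (u : Equiv.Perm (Fin n)) (b : ℕ × ℕ) :
    Equiv.Perm (Fin n) :=
  if invCount u < invCount (u * adjSwap (canonLabel v b)) then u * adjSwap (canonLabel v b)
  else u

/-- The Demazure product of a pipe dream `P ⊆ D(v)`, scanning boxes in reading order. -/
def demazure (v : Equiv.Perm (Fin n)) (P : Finset (ℕ × ℕ)) : Equiv.Perm (Fin n) :=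
  (readingList n P).foldl (demStep v) 1

/-- Pipe dreams on `D(v)` whose Demazure product is `x`. -/
def Pipes (v x : Equiv.Perm (Fin n)) : Finset (Finset (ℕ × ℕ)) :=
  (Rothe v).powerset.filter (fun P => demazure v P = x)

/-- Reduced pipe dreams on `D(v)` for `x`. -/
def RedPipes (v x : Equiv.Perm (Fin n)) : Finset (Finset (ℕ × ℕ)) :=
  (Pipes v x).filter (fun P => P.card = invCount x)

/-- Faces of the pipe complex `Δ_{v,w}`: subsets `F ⊆ D(v)` such that `D(v) \ F`
contains a reduced pipe dream for `w₀ w`. -/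
def IsFace (v w : Equiv.Perm (Fin n)) (F : Finset (ℕ × ℕ)) : Prop :=
  F ⊆ Rothe v ∧ ∃ P ∈ RedPipes v (longest * w), P ⊆ Rothe v \ F

/-- The staircase `{(i,j) : i + j ≤ n}` (1-based), translated to 0-based boxes. -/
def staircase (n : ℕ) : Finset (ℕ × ℕ) :=
  (Finset.range n ×ˢ Finset.range n).filter (fun p => p.1 + p.2 + 2 ≤ n)

/-- The label `i + j - 1` (1-based) of a staircase box, in 0-based coordinates. -/
def fkLabel (b : ℕ × ℕ) : ℕ := b.1 + b.2 + 1

/-- One step of the Demazure product for Fomin–Kirillov pipe dreams. -/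
def fkStep (u : Equiv.Perm (Fin n)) (b : ℕ × ℕ) : Equiv.Perm (Fin n) :=
  if invCount u < invCount (u * adjSwap (fkLabel b)) then u * adjSwap (fkLabel b) else u

/-- The Demazure product of an FK pipe dream on the staircase. -/
def fkDemazure (n : ℕ) (P : Finset (ℕ × ℕ)) : Equiv.Perm (Fin n) :=
  (readingList n P).foldl fkStep 1

/-- FK pipe dreams on the staircase with Demazure product `x`. -/
def FKPipes (x : Equiv.Perm (Fin n)) : Finset (Finset (ℕ × ℕ)) :=
  (staircase n).powerset.filter (fun P => fkDemazure n P = x)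

/-- Reduced FK pipe dreams for `x`. -/
def RedFKPipes (x : Equiv.Perm (Fin n)) : Finset (Finset (ℕ × ℕ)) :=
  (FKPipes x).filter (fun P => P.card = invCount x)

/-- The coordinate ring `R_v = k[z_{ij} : (i,j) ∈ D(v)]`. -/
abbrev KLRing (k : Type) [Field k] (v : Equiv.Perm (Fin n)) : Type :=
  MvPolynomial {b : ℕ × ℕ // b ∈ Rothe v} k

/-- The specialized generic matrix `Z^{(v)}`: variables on `D(v)`, `1` in positions
`(n - v(j) + 1, j)` (1-based) and `0` elsewhere. -/
def klMatrix (k : Type) [Field k] (v : Equiv.Perm (Fin n)) :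
    Matrix (Fin n) (Fin n) (KLRing k v) := fun i j =>
  if h : ((i : ℕ), (j : ℕ)) ∈ Rothe v then X ⟨((i : ℕ), (j : ℕ)), h⟩
  else if (i : ℕ) + permVal v j + 1 = n then 1 else 0

/-- The minors of size `1 + r^w_{ij}` of the southwest submatrix `Z^{(v)}_{ij}`
(`(i,j)` a 0-based box, so rows `0..i` and columns `0..j`). -/
def minorsAt (k : Type) [Field k] (v w : Equiv.Perm (Fin n)) (i j : ℕ) :
    Set (KLRing k v) :=
  { d | ∃ ri ci : Fin (rankMat w i j + 1) → Fin n,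
      StrictMono ri ∧ StrictMono ci ∧ (∀ a, (ri a : ℕ) ≤ i) ∧ (∀ a, (ci a : ℕ) ≤ j) ∧
      d = ((klMatrix k v).submatrix ri ci).det }

/-- The Kazhdan–Lusztig ideal `I_{v,w}`. -/
def KLIdeal (k : Type) [Field k] (v w : Equiv.Perm (Fin n)) : Ideal (KLRing k v) :=
  Ideal.span { d | ∃ i j : ℕ, i < n ∧ j < n ∧ d ∈ minorsAt k v w i j }

/-- The essential minors of `I_{v,w}`: those at boxes of the essential set of `w`. -/
def essentialMinors (k : Type) [Field k] (v w : Equiv.Perm (Fin n)) : Set (KLRing k v) :=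
  { d | ∃ b ∈ essentialSet w, d ∈ minorsAt k v w b.1 b.2 }

/-- Significance of a variable: `z_{ij} ≻ z_{kl}` iff `j > l` or (`j = l` and `i < k`),
encoded so that larger significance means ≺-larger variable. -/
def sigIdx (n : ℕ) (b : ℕ × ℕ) : ℕ := b.2 * n + (n - 1 - b.1)

/-- The exponent in a monomial of the variable of significance `s`. -/
def expAt {v : Equiv.Perm (Fin n)} (m : {b : ℕ × ℕ // b ∈ Rothe v} →₀ ℕ) (s : ℕ) : ℕ :=
  ∑ b ∈ m.support, if sigIdx n (b : ℕ × ℕ) = s then m b else 0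

/-- The lexicographic comparison of monomials: `m ≻ m'`. -/
def monGT {v : Equiv.Perm (Fin n)} (m m' : {b : ℕ × ℕ // b ∈ Rothe v} →₀ ℕ) : Prop :=
  ∃ s : ℕ, expAt m' s < expAt m s ∧ ∀ t : ℕ, s < t → expAt m t = expAt m' t

/-- `L` is the ≺-leading term of `f`. -/
def IsLeadTerm (k : Type) [Field k] {v : Equiv.Perm (Fin n)} (f L : KLRing k v) : Prop :=
  ∃ m ∈ f.support, (∀ m' ∈ f.support, m' ≠ m → monGT m m') ∧
    L = MvPolynomial.monomial m (f.coeff m)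

/-- The initial ideal of `I` with respect to `≺`: the ideal generated by the leading
terms of all nonzero elements of `I`. -/
def initialIdeal (k : Type) [Field k] {v : Equiv.Perm (Fin n)} (I : Ideal (KLRing k v)) :
    Ideal (KLRing k v) :=
  Ideal.span { L | ∃ f ∈ I, f ≠ 0 ∧ IsLeadTerm k f L }


/-- `i` (1-based) is the last ascent of `v`: `v(i) < v(i+1)` and no ascent occurs later. -/
def IsLastAscent (v : Equiv.Perm (Fin n)) (i : ℕ) : Prop :=
  1 ≤ i ∧ i < n ∧ permVal v (i - 1) < permVal v i ∧
    ∀ i' : ℕ, i < i' → i' < n → ¬ permVal v (i' - 1) < permVal v i'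

/-- The box `z_last = (n - v(i+1) + 1, i)` (1-based), in 0-based coordinates,
where `i` is the last ascent of `v`. -/
def zlastBox (v : Equiv.Perm (Fin n)) (i : ℕ) : ℕ × ℕ :=
  (n - permVal v i - 1, i - 1)

/-- The relabeling map `φ`: delete the box `z_last` and move every other box of
column `i` (1-based) one step to the right. -/
def phiMap (v : Equiv.Perm (Fin n)) (i : ℕ) (P : Finset (ℕ × ℕ)) : Finset (ℕ × ℕ) :=
  P.filter (fun b => b.2 ≠ i - 1) ∪
    ((P.filter (fun b => b.2 = i - 1 ∧ b.1 ≠ n - permVal v i - 1)).image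
      (fun b => (b.1, b.2 + 1)))

/-- The field of fractions of `ℤ[t_i : i ∈ ℕ]`, in which the Laurent polynomial ring
`ℤ[t_1^{±1},…,t_n^{±1}]` embeds. -/
abbrev LaurentField : Type := FractionRing (MvPolynomial ℕ ℤ)

/-- The image of the variable `t_m` (1-based). -/
def tv (m : ℕ) : LaurentField := algebraMap (MvPolynomial ℕ ℤ) LaurentField (X m)

/-! ### Ordered products over staircases in a monoid with Yang–Baxter relations -/

/-- The relations satisfied by the factors `h a p = 1 - (1 - p) π_a` of the 0-Hecke algebra, with
the spectral parameter `p` written multiplicatively: the last one is the Yang–Baxter equation. -/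
structure YB {K M : Type*} [Field K] [Monoid M] (h : ℕ → K → M) : Prop where
  one : ∀ a, h a 1 = 1
  mul : ∀ a p q, h a p * h a q = h a (p * q)
  comm : ∀ a b p q, a + 2 ≤ b → Commute (h a p) (h b q)
  braid : ∀ a p q,
    h a p * h (a + 1) (p * q) * h a q = h (a + 1) q * h a (p * q) * h (a + 1) p

/-- The ordered product of one row: the `k`-th column variable `x` (1-based) in the list
contributes `h (d + k) (x / y)`. -/
def rowL {K M : Type*} [Field K] [Monoid M] (h : ℕ → K → M) : ℕ → List K → K → M
  | _, [], _ => 1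
  | d, x :: L, y => h (d + 1) (x / y) * rowL h (d + 1) L y

/-- The ordered product over a staircase with column variables `L` and row variables listed from
the bottom row up, labels shifted by `d`. The bottom row meets all columns but the last. -/
def stairL {K M : Type*} [Field K] [Monoid M] (h : ℕ → K → M) : ℕ → List K → List K → M
  | _, _, [] => 1
  | d, L, y :: ys => stairL h (d + 1) L.dropLast ys * rowL h d L.dropLast y

section YangBaxter

variable {K M : Type*} [Field K] [Monoid M] {h : ℕ → K → M}

theorem rowL_append (d : ℕ) (A B : List K) (y : K) :
    rowL h d (A ++ B) y = rowL h d A y * rowL h (d + A.length) B y := by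
  induction A generalizing d with
  | nil => simp [rowL]
  | cons a A ih =>
    simp only [List.cons_append, rowL, ih, List.length_cons, mul_assoc]
    rw [show d + 1 + A.length = d + (A.length + 1) by omega]

theorem rowL_comm_right (H : YB h) (d a : ℕ) (had : a + 1 ≤ d) (L : List K) (y p : K) :
    Commute (h a p) (rowL h d L y) := by
  induction L generalizing d with
  | nil => exact Commute.one_right _
  | cons x L ih => exact (H.comm _ _ _ _ (by omega)).mul_right (ih (d + 1) (by omega))

theorem rowL_comm_left (H : YB h) (d a : ℕ) (L : List K) (had : d + L.length + 2 ≤ a) (y p : K) :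
    Commute (rowL h d L y) (h a p) := by
  induction L generalizing d with
  | nil => exact Commute.one_left _
  | cons x L ih =>
    simp only [List.length_cons] at had
    exact (H.comm _ _ _ _ (by omega)).mul_left (ih (d + 1) (by omega))

theorem rowL_comm_rowL (H : YB h) (d e : ℕ) (A B : List K) (had : d + A.length + 1 ≤ e) (y : K) :
    Commute (rowL h d A y) (rowL h e B y) := by
  induction A generalizing d with
  | nil => exact Commute.one_left _
  | cons x L ih =>
    simp only [List.length_cons] at had
    exact (rowL_comm_right H _ _ (by omega) _ _ _).mul_left (ih (d + 1) (by omega))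

theorem stairL_last (d : ℕ) (A : List K) (b c : K) (ys : List K) :
    stairL h d (A ++ [b]) ys = stairL h d (A ++ [c]) ys := by
  cases ys with
  | nil => rfl
  | cons y ys => simp [stairL]

/-- Exchanging two adjacent column variables of a staircase product costs one factor on the right.
In the bottom row this is the Yang–Baxter equation, which moves the factor past that row. -/
theorem stairL_swap (H : YB h) (d : ℕ) (A C ys : List K) (b c : K) (hb : b ≠ 0) (hc : c ≠ 0)
    (hy : ∀ y ∈ ys, y ≠ 0) (hl : A.length + C.length + 2 ≤ ys.length) :
    stairL h d (A ++ c :: b :: C) ys * h (d + A.length + 1) (b / c)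
      = stairL h d (A ++ b :: c :: C) ys := by
  induction ys generalizing d C with
  | nil => simp at hl
  | cons y ys ih =>
    have hy0 : y ≠ 0 := hy y (by simp)
    have e1 : c / y * (b / c) = b / y := by field_simp
    rcases List.eq_nil_or_concat C with rfl | ⟨C', z, rfl⟩
    · have d1 : (A ++ [c, b]).dropLast = A ++ [c] := by
        rw [show A ++ [c, b] = (A ++ [c]) ++ [b] by simp, List.dropLast_concat]
      have d2 : (A ++ [b, c]).dropLast = A ++ [b] := by
        rw [show A ++ [b, c] = (A ++ [b]) ++ [c] by simp, List.dropLast_concat]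
      simp only [stairL, d1, d2, rowL_append, rowL, mul_one]
      rw [stairL_last (d + 1) A c b, mul_assoc, mul_assoc, H.mul, e1]
    · have d1 : ∀ p q : K, (A ++ p :: q :: C'.concat z).dropLast = A ++ p :: q :: C' := by
        intro p q
        rw [show A ++ p :: q :: C'.concat z = (A ++ p :: q :: C') ++ [z] by simp,
          List.dropLast_concat]
      simp only [List.concat_eq_append, List.length_append, List.length_cons, List.length_nil,
        zero_add] at hl
      have IH := ih (d + 1) C' (fun y hy' => hy y (by simp [hy'])) (by omega)
      simp only [stairL, d1, rowL_append, rowL]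
      rw [← IH]
      have cA := rowL_comm_left H d (d + A.length + 1 + 1) A (by omega) y (b / c)
      have cC := rowL_comm_right H (d + A.length + 1 + 1) (d + A.length + 1) (by omega) C' y (b / c)
      have br := H.braid (d + A.length + 1) (c / y) (b / c)
      rw [e1] at br
      rw [show d + 1 + A.length + 1 = d + A.length + 1 + 1 by omega]
      generalize d + A.length + 1 = a at *
      calc _ = stairL h (d + 1) (A ++ c :: b :: C') ys * (rowL h d A y *
              (h a (c / y) * h (a + 1) (b / y) * (rowL h (a + 1) C' y * h a (b / c)))) := by
            simp only [mul_assoc]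
        _ = stairL h (d + 1) (A ++ c :: b :: C') ys * (rowL h d A y *
              ((h a (c / y) * h (a + 1) (b / y) * h a (b / c)) * rowL h (a + 1) C' y)) := by
            rw [← cC.eq]; simp only [mul_assoc]
        _ = stairL h (d + 1) (A ++ c :: b :: C') ys * ((rowL h d A y * h (a + 1) (b / c)) *
              (h a (b / y) * h (a + 1) (c / y) * rowL h (a + 1) C' y)) := by
            rw [br]; simp only [mul_assoc]
        _ = _ := by rw [cA.eq]; simp only [mul_assoc]

/-- Iterated exchanges carry a column variable `c` to the right end, where it is not used. -/
theorem stairL_move (H : YB h) (d : ℕ) (A B ys : List K) (c : K) (hc : c ≠ 0)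
    (hB : ∀ b ∈ B, b ≠ 0) (hy : ∀ y ∈ ys, y ≠ 0) (hl : A.length + B.length ≤ ys.length) :
    stairL h (d + 1) (A ++ c :: B).dropLast ys * rowL h (d + A.length + 1) B.dropLast c
      = stairL h (d + 1) (A ++ B) ys := by
  induction B generalizing A with
  | nil => simp [rowL]
  | cons b B ih =>
    rcases List.eq_nil_or_concat B with rfl | ⟨C, z, rfl⟩
    · rw [show A ++ [c, b] = (A ++ [c]) ++ [b] by simp, List.dropLast_concat]
      simp only [List.dropLast_singleton, rowL, mul_one]
      exact stairL_last _ _ _ _ _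
    · simp only [List.concat_eq_append] at *
      have IH := ih (A ++ [b]) (fun b hb' => hB b (by simp_all))
        (by simp at hl ⊢; omega)
      have sw := stairL_swap H (d + 1) A C ys b c (hB b (by simp)) hc hy (by simp at hl; omega)
      rw [show A ++ c :: b :: (C ++ [z]) = (A ++ c :: b :: C) ++ [z] by simp,
        List.dropLast_concat, show b :: (C ++ [z]) = (b :: C) ++ [z] by simp,
        List.dropLast_concat]
      rw [show A ++ [b] ++ c :: (C ++ [z]) = (A ++ b :: c :: C) ++ [z] by simp,
        List.dropLast_concat, List.dropLast_concat, ← sw] at IH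
      simp only [rowL]
      simp only [List.length_append, List.length_cons, List.length_nil, zero_add] at IH
      rw [← mul_assoc]
      rw [show d + (A.length + 1) + 1 = d + A.length + 1 + 1 by omega,
        show d + 1 + A.length + 1 = d + A.length + 1 + 1 by omega] at IH
      rw [IH]
      simp

/-- If the bottom row variable equals the column variable `y` after `A`, the bottom row can be
cut off at that column, and the column deleted from the rows above. -/
theorem stairL_step (H : YB h) (d : ℕ) (A B ys : List K) (y : K) (hy0 : y ≠ 0)
    (hB : ∀ b ∈ B, b ≠ 0) (hy : ∀ y ∈ ys, y ≠ 0) (hl : A.length + B.length ≤ ys.length) :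
    stairL h d (A ++ y :: B) (y :: ys) = stairL h (d + 1) (A ++ B) ys * rowL h d A y := by
  rw [← stairL_move H d A B ys y hy0 hB hy hl]
  simp only [stairL]
  rcases List.eq_nil_or_concat B with rfl | ⟨C, z, rfl⟩
  · simp [rowL]
  · simp only [List.concat_eq_append]
    rw [show A ++ y :: (C ++ [z]) = (A ++ y :: C) ++ [z] by simp,
        List.dropLast_concat, List.dropLast_concat, rowL_append]
    simp only [rowL]
    rw [div_self hy0, H.one, one_mul, mul_assoc,
      (rowL_comm_rowL H d (d + A.length + 1) A C (by omega) y).eq]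

/-- A row product in terms of labels counting the columns weakly to the left. -/
theorem rowL_eq_prod (d : ℕ) (x : ℕ → K) (y : K) (l : List ℕ) (hs : l.Pairwise (· < ·)) :
    rowL h d (l.map x) y
      = (l.map (fun j => h (d + (l.filter (· ≤ j)).length) (x j / y))).prod := by
  induction l using List.reverseRecOn with
  | nil => simp [rowL]
  | append_singleton l a ih =>
    rw [List.pairwise_append] at hs
    obtain ⟨h1, -, h3⟩ := hs
    have h3' : ∀ j ∈ l, j < a := fun j hj => h3 j hj a (by simp)
    rw [List.map_append, rowL_append, ih h1, List.map_append, List.prod_append]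
    congr 1
    · congr 1
      apply List.map_congr_left
      intro j hj
      have := h3' j hj
      rw [List.filter_append, (List.filter_eq_nil_iff (l := [a]) (p := fun i => decide (i ≤ j))).2
        (by simp; omega)]
      simp
    · have : l.filter (· ≤ a) = l := List.filter_eq_self.2 (by
        intro j hj; have := h3' j hj; simp; omega)
      simp [rowL, this, List.filter_append, add_assoc]

/-- A staircase product as a product over values `k`, the row variable of value `k` being `t k`. -/
theorem stairL_range (n : ℕ) (x t : ℕ → K) (m : ℕ) (hm : m ≤ n) :
    stairL h (n - m) ((List.range m).map x) ((List.range m).reverse.map t)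
      = ((List.range m).map (fun k => rowL h (n - 1 - k) ((List.range k).map x) (t k))).prod := by
  induction m with
  | zero => simp [stairL]
  | succ m ih =>
    rw [List.range_succ, List.reverse_append, List.map_append, List.map_append]
    simp only [List.reverse_singleton, List.map_append, List.map_cons, List.map_nil,
      List.singleton_append, stairL, List.dropLast_concat, List.prod_append, List.prod_cons,
      List.prod_nil, mul_one]
    rw [show n - (m + 1) + 1 = n - m by omega, ih (by omega),
      show n - (m + 1) = n - 1 - m by omega]

/-- The columns of value at most `m`, split at the column `c` of value exactly `m`: deleting `c`
leaves the columns of value less than `m`. -/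
theorem filter_split (n c m : ℕ) (hc : c < n) (f : ℕ → ℕ) (hfc : f c = m)
    (hf : ∀ j < n, f j = m → j = c) :
    ∃ B : List ℕ,
      (List.range n).filter (fun j => decide (f j < m + 1))
        = (List.range n).filter (fun j => decide (f j < m ∧ j < c)) ++ c :: B ∧
      (List.range n).filter (fun j => decide (f j < m))
        = (List.range n).filter (fun j => decide (f j < m ∧ j < c)) ++ B := by
  have hr : List.range n = List.range c ++ c :: List.range' (c + 1) (n - c - 1) := by
    rw [List.range_eq_range', List.range_eq_range',
      show c :: List.range' (c + 1) (n - c - 1) = List.range' c (n - c) from by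
        rw [show n - c = n - c - 1 + 1 by omega, List.range'_succ]; simp]
    have := List.range'_append_1 (s := 0) (m := c) (n := n - c)
    rw [zero_add] at this
    rw [this]; congr 1; omega
  refine ⟨(List.range' (c + 1) (n - c - 1)).filter (fun j => decide (f j < m)), ?_, ?_⟩
  all_goals
    rw [hr]
    simp only [List.filter_append, List.filter_cons, hfc]
    have hB : (List.range' (c + 1) (n - c - 1)).filter
        (fun j => decide (f j < m ∧ j < c)) = [] := by
      rw [List.filter_eq_nil_iff]
      intro j hj
      rw [List.mem_range'_1] at hj
      simp; omega
    have hA : (List.range c).filter (fun j => decide (f j < m ∧ j < c))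
        = (List.range c).filter (fun j => decide (f j < m)) := by
      apply List.filter_congr
      intro j hj
      simp at hj
      simp [hj]
    rw [hA, hB]
    simp only [List.append_nil, Nat.lt_succ_self, decide_true, if_true,
      lt_self_iff_false, decide_false, false_and, if_false, Bool.false_eq_true]
  congr 1
  on_goal 2 => congr 1
  all_goals
    apply List.filter_congr
    intro j hj
    have := hf j (by simp at hj; omega)
    have : j ≠ c := by simp at hj; omega
    simp; omega

/-- The same staircase product, when the column variables are the row variables permuted by `f`
(with inverse `g`): row `k` keeps only the columns `j < g k` with `f j < k`. -/
theorem stairL_rothe (H : YB h) (n : ℕ) (t : ℕ → K) (ht : ∀ k, t k ≠ 0) (f g : ℕ → ℕ)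
    (hg : ∀ k < n, g k < n) (hfg : ∀ k < n, f (g k) = k) (hgf : ∀ j < n, g (f j) = j)
    (m : ℕ) (hm : m ≤ n) :
    stairL h (n - m) (((List.range n).filter (fun j => decide (f j < m))).map (fun j => t (f j)))
        ((List.range m).reverse.map t)
      = ((List.range m).map (fun k => rowL h (n - 1 - k)
          (((List.range n).filter (fun j => decide (f j < k ∧ j < g k))).map
            (fun j => t (f j))) (t k))).prod ∧
    ((List.range n).filter (fun j => decide (f j < m))).length = m := by
  induction m with
  | zero => simp [stairL]
  | succ m ih =>
    obtain ⟨B, e1, e2⟩ := filter_split n (g m) m (hg m (by omega)) f (hfg m (by omega))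
      (fun j hj e => by rw [← e, hgf j hj])
    obtain ⟨ih1, ih2⟩ := ih (by omega)
    rw [e2, List.length_append] at ih2
    constructor
    · rw [e1, List.map_append, List.map_cons, hfg m (by omega)]
      rw [List.range_succ, List.reverse_append]
      simp only [List.reverse_singleton, List.singleton_append, List.map_cons]
      rw [stairL_step H _ _ _ _ _ (ht m) (by simp; intros; exact ht _)
        (by simp; intros; exact ht _)
        (by simp only [List.length_map, List.length_reverse, List.length_range, ih2, le_refl]), ← List.map_append, ← e2,
        show n - (m + 1) + 1 = n - m by omega, ih1,
        show n - (m + 1) = n - 1 - m by omega]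
      simp
    · rw [e1, List.length_append, List.length_cons]; omega

end YangBaxter

/-! ### Demazure operators -/

theorem adjSwap_mul_self (l : ℕ) : (adjSwap l : Equiv.Perm (Fin n)) * adjSwap l = 1 := by
  unfold adjSwap; split <;> simp

theorem invCount_mul_of_lt (u : Equiv.Perm (Fin n)) (l : ℕ) (hl : 1 ≤ l ∧ l < n)
    (hu : u ⟨l - 1, by omega⟩ < u ⟨l, hl.2⟩) :
    invCount (u * adjSwap l) = invCount u + 1 := by
  have hs : (adjSwap l : Equiv.Perm (Fin n)) = Equiv.swap ⟨l - 1, by omega⟩ ⟨l, hl.2⟩ := by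
    simp [adjSwap, hl]
  rw [hs]
  set a : Fin n := ⟨l - 1, by omega⟩ with ha
  set b : Fin n := ⟨l, hl.2⟩ with hb
  have hab : a ≠ b := by simp [ha, hb, Fin.ext_iff]; omega
  have hab' : a < b := by rw [Fin.lt_def]; change l - 1 < l; omega
  -- `a` and `b` are adjacent, so exchanging them preserves the order of every other pair
  have ord : ∀ p q : Fin n, ¬ (p = a ∧ q = b) → ¬ (p = b ∧ q = a) →
      (Equiv.swap a b p < Equiv.swap a b q ↔ p < q) := by
    intro p q h1 h2
    have va : (a : ℕ) = l - 1 := rfl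
    have vb : (b : ℕ) = l := rfl
    simp only [Fin.ext_iff] at h1 h2
    simp only [Equiv.swap_apply_def, Fin.ext_iff]
    split_ifs <;> simp only [Fin.lt_def] <;> omega
  have key : (Finset.univ : Finset (Fin n × Fin n)).filter
      (fun p => p.1 < p.2 ∧ (u * Equiv.swap a b) p.2 < (u * Equiv.swap a b) p.1)
      = insert (a, b) (((Finset.univ : Finset (Fin n × Fin n)).filter
        (fun p => p.1 < p.2 ∧ u p.2 < u p.1)).map
          ((Equiv.swap a b).prodCongr (Equiv.swap a b)).toEmbedding) := by
    ext ⟨p, q⟩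
    rw [Finset.mem_filter]
    simp only [Finset.mem_filter, Finset.mem_univ, true_and, Finset.mem_insert,
      Finset.mem_map_equiv, Equiv.prodCongr_symm, Equiv.symm_swap, Equiv.prodCongr_apply,
      Prod.map_apply, Equiv.Perm.mul_apply, Prod.mk.injEq]
    by_cases h1 : p = a ∧ q = b
    · obtain ⟨rfl, rfl⟩ := h1
      simp only [Equiv.swap_apply_left, Equiv.swap_apply_right, hu, and_true, true_or, iff_true]
      exact hab'
    · by_cases h2 : p = b ∧ q = a
      · obtain ⟨rfl, rfl⟩ := h2
        simp only [Equiv.swap_apply_left, Equiv.swap_apply_right, hu.asymm, and_false, or_false,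
          hab'.asymm, h1]
      · rw [ord p q h1 h2]
        simp only [h1, false_or]
  unfold invCount
  rw [key, Finset.card_insert_of_notMem, Finset.card_map]
  simp only [Finset.mem_map_equiv, Equiv.prodCongr_symm, Equiv.symm_swap, Equiv.prodCongr_apply,
      Prod.map_apply, Finset.mem_filter, Equiv.swap_apply_left, Equiv.swap_apply_right]
  rintro ⟨-, h1, -⟩
  exact hab'.asymm h1

/-- The Demazure product of `u` with `s_l`. -/
def dem (l : ℕ) (u : Equiv.Perm (Fin n)) : Equiv.Perm (Fin n) :=
  if invCount u < invCount (u * adjSwap l) then u * adjSwap l else u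

theorem invCount_lt_iff (u : Equiv.Perm (Fin n)) (l : ℕ) (hl : 1 ≤ l ∧ l < n) :
    invCount u < invCount (u * adjSwap l) ↔ u ⟨l - 1, by omega⟩ < u ⟨l, hl.2⟩ := by
  constructor
  · intro hlt
    by_contra hu
    have hs : (adjSwap l : Equiv.Perm (Fin n)) = Equiv.swap ⟨l - 1, by omega⟩ ⟨l, hl.2⟩ := by
      simp [adjSwap, hl]
    have hne : u ⟨l - 1, by omega⟩ ≠ u ⟨l, hl.2⟩ := by
      intro e; have := u.injective e; simp at this; omega
    have := invCount_mul_of_lt (u * adjSwap l) l hl (by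
      rw [hs]; simp only [Equiv.Perm.mul_apply, Equiv.swap_apply_left, Equiv.swap_apply_right]
      exact lt_of_le_of_ne (not_lt.1 hu) hne.symm)
    rw [mul_assoc, adjSwap_mul_self, mul_one] at this
    omega
  · intro hu
    rw [invCount_mul_of_lt u l hl hu]; omega

theorem invCount_dem_le (l : ℕ) (u : Equiv.Perm (Fin n)) :
    invCount (dem l u) ≤ invCount u + 1 := by
  unfold dem
  split_ifs with hlt
  · by_cases hl : 1 ≤ l ∧ l < n
    · rw [invCount_mul_of_lt u l hl ((invCount_lt_iff u l hl).1 hlt)]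
    · simp [adjSwap, hl]
  · omega

theorem dem_of_not (l : ℕ) (hl : ¬ (1 ≤ l ∧ l < n)) (u : Equiv.Perm (Fin n)) : dem l u = u := by
  simp [dem, adjSwap, hl]

/-- The Demazure product with `s_l` sorts the values in positions `l - 1`, `l` (0-based)
decreasingly. -/
theorem dem_apply (l : ℕ) (hl : 1 ≤ l ∧ l < n) (u : Equiv.Perm (Fin n)) (k : Fin n) :
    dem l u k = if (k : ℕ) = l - 1 then max (u ⟨l - 1, by omega⟩) (u ⟨l, hl.2⟩)
      else if (k : ℕ) = l then min (u ⟨l - 1, by omega⟩) (u ⟨l, hl.2⟩) else u k := by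
  have hs : (adjSwap l : Equiv.Perm (Fin n)) = Equiv.swap ⟨l - 1, by omega⟩ ⟨l, hl.2⟩ := by
    simp [adjSwap, hl]
  unfold dem
  simp only [invCount_lt_iff u l hl]
  by_cases h1 : (k : ℕ) = l - 1
  · have : k = ⟨l - 1, by omega⟩ := Fin.ext h1
    rw [if_pos h1, this]
    split_ifs with h2
    · simp [hs, max_eq_right h2.le]
    · simp [max_eq_left (not_lt.1 h2)]
  · by_cases h2 : (k : ℕ) = l
    · have : k = ⟨l, hl.2⟩ := Fin.ext h2
      rw [if_neg h1, if_pos h2, this]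
      split_ifs with h3
      · simp [hs, min_eq_left h3.le]
      · simp [min_eq_right (not_lt.1 h3)]
    · rw [if_neg h1, if_neg h2]
      split_ifs with h3
      · rw [hs, Equiv.Perm.mul_apply, Equiv.swap_apply_of_ne_of_ne]
        · simpa [Fin.ext_iff] using h1
        · simpa [Fin.ext_iff] using h2
      · rfl

theorem dem_idem (l : ℕ) (u : Equiv.Perm (Fin n)) : dem l (dem l u) = dem l u := by
  by_cases hl : 1 ≤ l ∧ l < n
  · ext k
    simp only [dem_apply l hl]
    have : l ≠ l - 1 := by omega
    simp [this]
    split_ifs <;> simp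
  · simp [dem_of_not l hl]

theorem dem_comm (a b : ℕ) (hab : a + 2 ≤ b) (u : Equiv.Perm (Fin n)) :
    dem a (dem b u) = dem b (dem a u) := by
  by_cases ha : 1 ≤ a ∧ a < n
  · by_cases hb : 1 ≤ b ∧ b < n
    · ext k
      simp only [dem_apply a ha, dem_apply b hb]
      have e1 : a ≠ b := by omega
      have e2 : a ≠ b - 1 := by omega
      have e3 : a - 1 ≠ b := by omega
      have e4 : a - 1 ≠ b - 1 := by omega
      simp only [e1, e2, e3, e4, e1.symm, e2.symm, e3.symm, e4.symm, if_false]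
      split_ifs <;> first | rfl | omega
    · simp [dem_of_not b hb]
  · simp [dem_of_not a ha]

theorem dem_braid (a : ℕ) (u : Equiv.Perm (Fin n)) :
    dem a (dem (a + 1) (dem a u)) = dem (a + 1) (dem a (dem (a + 1) u)) := by
  by_cases ha : 1 ≤ a ∧ a < n
  · by_cases hb : 1 ≤ a + 1 ∧ a + 1 < n
    · ext k
      simp only [dem_apply a ha, dem_apply (a + 1) hb]
      have e1 : a ≠ a - 1 := by omega
      have e2 : a + 1 ≠ a := by omega
      have e3 : a + 1 ≠ a - 1 := by omega
      simp only [e1, e2, e3, e1.symm, e2.symm, e3.symm, if_false, if_true, Nat.add_sub_cancel]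
      generalize u ⟨a - 1, _⟩ = x
      generalize u ⟨a, _⟩ = y
      generalize u ⟨a + 1, _⟩ = z
      split_ifs <;> first | rfl | omega | grind
    · simp [dem_of_not _ hb, dem_idem]
  · simp [dem_of_not _ ha, dem_idem]

/-- The operator `π_l` on functions on the symmetric group, precomposition with the Demazure
product by `s_l`. -/
def demOp (n l : ℕ) : Module.End LaurentField (Equiv.Perm (Fin n) → LaurentField) :=
  LinearMap.funLeft LaurentField LaurentField (dem l)

/-- The factor `1 - (1 - p) π_l`. -/
def hOp (n l : ℕ) (p : LaurentField) :
    Module.End LaurentField (Equiv.Perm (Fin n) → LaurentField) :=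
  1 - (1 - p) • demOp n l

theorem hOp_apply (l : ℕ) (p : LaurentField) (F : Equiv.Perm (Fin n) → LaurentField)
    (u : Equiv.Perm (Fin n)) : hOp n l p F u = F u - (1 - p) * F (dem l u) := by
  simp [hOp, demOp, LinearMap.funLeft_apply]

theorem hOp_YB (n : ℕ) : YB (hOp n) where
  one a := by simp [hOp]
  mul a p q := by
    refine LinearMap.ext fun F => funext fun u => ?_
    simp only [Module.End.mul_apply, hOp_apply, dem_idem]
    ring
  comm a b p q hab := by
    refine LinearMap.ext fun F => funext fun u => ?_
    simp only [Module.End.mul_apply, hOp_apply, dem_comm a b hab]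
    ring
  braid a p q := by
    refine LinearMap.ext fun F => funext fun u => ?_
    simp only [Module.End.mul_apply, hOp_apply, dem_idem, dem_braid]
    ring

/-! ### Sums over pipe dreams as matrix coefficients -/

/-- Expanding the ordered product of the factors `1 - wt b · π_b` over a list of boxes gives the
signed sum over subsets of boxes with prescribed Demazure product. -/
theorem sum_powerset_eq (lab : ℕ × ℕ → ℕ) (p : ℕ × ℕ → LaurentField) (x : Equiv.Perm (Fin n))
    (l : List (ℕ × ℕ)) (hl : l.Nodup) (u : Equiv.Perm (Fin n)) :
    (∑ P ∈ l.toFinset.powerset,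
      if (l.filter (fun b => decide (b ∈ P))).foldl (fun u b => dem (lab b) u) u = x
        then (-1 : LaurentField) ^ P.card * ∏ b ∈ P, (1 - p b) else 0)
      = (l.map (fun b => hOp n (lab b) (p b))).prod (Pi.single x 1) u := by
  induction l generalizing u with
  | nil => simp [Pi.single_apply]
  | cons b l ih =>
    rw [List.nodup_cons] at hl
    have hb : b ∉ l.toFinset := by simpa using hl.1
    rw [List.toFinset_cons, Finset.sum_powerset_insert hb, List.map_cons, List.prod_cons,
      Module.End.mul_apply, hOp_apply, ← ih hl.2, ← ih hl.2, sub_eq_add_neg, Finset.mul_sum,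
      ← Finset.sum_neg_distrib]
    congr 1
    · apply Finset.sum_congr rfl
      intro P hP
      have : b ∉ P := fun h' => hb (Finset.mem_powerset.1 hP h')
      simp [this]
    · apply Finset.sum_congr rfl
      intro P hP
      have hbP : b ∉ P := fun h' => hb (Finset.mem_powerset.1 hP h')
      have hf : l.filter (fun b' => decide (b' ∈ insert b P))
          = l.filter (fun b' => decide (b' ∈ P)) := by
        apply List.filter_congr
        intro b' hb'
        have : b' ≠ b := fun e => hl.1 (e ▸ hb')
        simp [this]
      rw [List.filter_cons_of_pos (by simp), hf, List.foldl_cons,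
        Finset.card_insert_of_notMem hbP, Finset.prod_insert hbP]
      split_ifs
      · ring
      · simp

theorem readingList_filter (B P : Finset (ℕ × ℕ)) (hPB : P ⊆ B) :
    (readingList n B).filter (fun b => decide (b ∈ P)) = readingList n P := by
  unfold readingList
  rw [List.filter_flatMap]
  congr 1
  funext i
  rw [List.filter_map, List.filter_filter]
  congr 1
  apply List.filter_congr
  intro j _
  by_cases hj : (i, j) ∈ P
  · simp [hj, hPB hj]
  · simp [hj]

theorem mem_readingList (B : Finset (ℕ × ℕ)) (b : ℕ × ℕ) :
    b ∈ readingList n B ↔ b ∈ B ∧ b.1 < n ∧ b.2 < n := by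
  obtain ⟨i, j⟩ := b
  simp only [readingList, List.mem_flatMap, List.mem_reverse, List.mem_range, List.mem_map,
    List.mem_filter, decide_eq_true_eq, Prod.mk.injEq]
  constructor
  · rintro ⟨i', hi, j', ⟨hj, hB⟩, rfl, rfl⟩
    exact ⟨hB, hi, hj⟩
  · rintro ⟨hB, hi, hj⟩
    exact ⟨i, hi, j, ⟨hj, hB⟩, rfl, rfl⟩

theorem readingList_nodup (B : Finset (ℕ × ℕ)) : (readingList n B).Nodup := by
  unfold readingList
  rw [List.nodup_flatMap]
  constructor
  · intro i _
    exact (List.nodup_range.filter _).map (fun a b e => by simpa using e)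
  · rw [List.pairwise_reverse]
    refine List.Pairwise.imp ?_ List.pairwise_lt_range
    intro a b hab
    simp only [List.disjoint_left, List.mem_map, Function.onFun]
    rintro _ ⟨j, -, rfl⟩ ⟨j', -, e⟩
    simp at e; omega

theorem invCount_one : invCount (1 : Equiv.Perm (Fin n)) = 0 := by
  simp only [invCount, Finset.card_eq_zero, Finset.filter_eq_empty_iff]
  rintro p - ⟨h1, h2⟩
  exact absurd h1 (not_lt.2 h2.le)

theorem invCount_foldl_le (lab : ℕ × ℕ → ℕ) (l : List (ℕ × ℕ)) (u : Equiv.Perm (Fin n)) :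
    invCount (l.foldl (fun u b => dem (lab b) u) u) ≤ invCount u + l.length := by
  induction l generalizing u with
  | nil => simp
  | cons b l ih =>
    have h1 := ih (dem (lab b) u)
    have h2 := invCount_dem_le (lab b) u
    simp only [List.foldl_cons, List.length_cons]
    omega

/-- The sum over pipe dreams in `B` with Demazure product `x` is, up to the sign of `x`, a matrix
coefficient of the ordered product over `B`. The truncated exponent `#P - ℓ(x)` is harmless because
a Demazure product of `#P` letters has length at most `#P`. -/
theorem pipe_sum_eq (lab : ℕ × ℕ → ℕ) (p : ℕ × ℕ → LaurentField) (x : Equiv.Perm (Fin n))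
    (B : Finset (ℕ × ℕ)) (hB : ∀ b ∈ B, b.1 < n ∧ b.2 < n) :
    (∑ P ∈ B.powerset.filter
        (fun P => (readingList n P).foldl (fun u b => dem (lab b) u) 1 = x),
      (-1 : LaurentField) ^ (P.card - invCount x) * ∏ b ∈ P, (1 - p b))
      = (-1) ^ invCount x *
        ((readingList n B).map (fun b => hOp n (lab b) (p b))).prod (Pi.single x 1) 1 := by
  have hBl : (readingList n B).toFinset = B := by
    ext b
    rw [List.mem_toFinset, mem_readingList]
    exact ⟨fun hb => hb.1, fun hb => ⟨hb, hB b hb⟩⟩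
  rw [← sum_powerset_eq lab p x _ (readingList_nodup B) 1, hBl, Finset.sum_filter, Finset.mul_sum]
  apply Finset.sum_congr rfl
  intro P hP
  rw [Finset.mem_powerset] at hP
  rw [readingList_filter B P hP]
  split_ifs with hx
  · have hlen : (readingList n P).length = P.card := by
      rw [← List.toFinset_card_of_nodup (readingList_nodup P)]
      congr 1
      ext b
      rw [List.mem_toFinset, mem_readingList]
      exact ⟨fun hb => hb.1, fun hb => ⟨hb, hB b (hP hb)⟩⟩
    have hle := invCount_foldl_le lab (readingList n P) (1 : Equiv.Perm (Fin n))
    rw [hx, invCount_one, hlen, zero_add] at hle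
    obtain ⟨c, hc⟩ := Nat.exists_eq_add_of_le hle
    rw [hc, Nat.add_sub_cancel_left, pow_add, ← mul_assoc, ← mul_assoc, ← mul_pow]
    simp
  · simp

/-! ### The two ordered products -/

/-- The product over a reading list, organised by the values `k = n - 1 - i` of the rows `i`. -/
theorem readingList_prod {M : Type*} [Monoid M] (F : ℕ × ℕ → M) (B : Finset (ℕ × ℕ)) :
    ((readingList n B).map F).prod
      = ((List.range n).map (fun k =>
        (((List.range n).filter (fun j => decide ((n - 1 - k, j) ∈ B))).map
          (fun j => F (n - 1 - k, j))).prod)).prod := by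
  have hr : (List.range n).reverse = (List.range n).map (fun k => n - 1 - k) := by
    rw [List.range_eq_range', List.reverse_range', List.range_eq_range']
    simp
  unfold readingList
  rw [hr, List.map_flatMap, List.flatMap_def, List.prod_flatten, List.map_map, List.map_map]
  congr 1
  apply List.map_congr_left
  intro k _
  simp only [Function.comp, List.map_map]
  rfl

theorem tv_ne_zero (m : ℕ) : tv m ≠ 0 := by
  unfold tv
  rw [Ne, IsFractionRing.to_map_eq_zero_iff]
  exact X_ne_zero m

theorem staircase_prod (x : ℕ → LaurentField) :
    ((readingList n (staircase n)).map
        (fun b => hOp n (fkLabel b) (x b.2 / tv (n - b.1)))).prod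
      = stairL (hOp n) 0 ((List.range n).map x)
          ((List.range n).reverse.map (fun k => tv (k + 1))) := by
  have := stairL_range (h := hOp n) n x (fun k => tv (k + 1)) n le_rfl
  rw [Nat.sub_self] at this
  rw [this, readingList_prod]
  congr 1
  apply List.map_congr_left
  intro k hk
  rw [List.mem_range] at hk
  have hf : (List.range n).filter (fun j => decide ((n - 1 - k, j) ∈ staircase n))
      = List.range k := by
    have h1 : (List.range n).filter (fun j => decide ((n - 1 - k, j) ∈ staircase n))
        = (List.range n).filter (fun j => decide (j < k)) := by
      apply List.filter_congr
      intro j hj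
      rw [List.mem_range] at hj
      simp only [staircase, Finset.mem_filter, Finset.mem_product, Finset.mem_range, decide_eq_decide]
      omega
    rw [h1, show n = k + (n - k) by omega, List.range_add, List.filter_append,
      List.filter_eq_self.2 (by simp), List.filter_eq_nil_iff.2 (by simp), List.append_nil]
  rw [hf, rowL_eq_prod _ _ _ _ List.pairwise_lt_range]
  congr 1
  apply List.map_congr_left
  intro j hj
  rw [List.mem_range] at hj
  have hlen : ((List.range k).filter (fun i => decide (i ≤ j))).length = j + 1 := by
    rw [show k = (j + 1) + (k - (j + 1)) by omega, List.range_add, List.filter_append,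
      List.filter_eq_self.2 (by simp; try omega), List.filter_eq_nil_iff.2 (by simp; try omega),
      List.append_nil, List.length_range]
  rw [hlen, show n - (n - 1 - k) = k + 1 by omega]
  rfl

theorem rothe_prod (v : Equiv.Perm (Fin n)) :
    ((readingList n (Rothe v)).map
        (fun b => hOp n (canonLabel v b) (tv (permVal v b.2 + 1) / tv (n - b.1)))).prod
      = stairL (hOp n) 0 ((List.range n).map (fun j => tv (permVal v j + 1)))
          ((List.range n).reverse.map (fun k => tv (k + 1))) := by
  have h1 : ∀ k < n, permVal v.symm k < n := fun k hk => by simp [permVal, hk]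
  have h1' : ∀ k < n, permVal v k < n := fun k hk => by simp [permVal, hk]
  have h2 : ∀ k < n, permVal v (permVal v.symm k) = k := fun k hk => by simp [permVal, hk]
  have h3 : ∀ k < n, permVal v.symm (permVal v k) = k := fun k hk => by simp [permVal, hk]
  have key := (stairL_rothe (hOp_YB n) n (fun k => tv (k + 1)) (fun k => tv_ne_zero _)
    (permVal v) (permVal v.symm) h1 h2 h3 n le_rfl).1
  rw [Nat.sub_self, List.filter_eq_self.2 (by simpa using h1')] at key
  rw [key, readingList_prod]
  congr 1
  apply List.map_congr_left
  intro k hk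
  rw [List.mem_range] at hk
  have hmem : ∀ j, (n - 1 - k, j) ∈ Rothe v ↔
      j < n ∧ permVal v j < k ∧ j < permVal v.symm k := by
    intro j
    simp only [Rothe, Finset.mem_filter, Finset.mem_product, Finset.mem_range]
    rw [show n - 1 - (n - 1 - k) = k by omega]
    omega
  have hf : (List.range n).filter (fun j => decide ((n - 1 - k, j) ∈ Rothe v))
      = (List.range n).filter (fun j => decide (permVal v j < k ∧ j < permVal v.symm k)) := by
    apply List.filter_congr
    intro j hj
    rw [List.mem_range] at hj
    simp [hmem, hj]
  rw [← hf, rowL_eq_prod _ _ _ _ (List.pairwise_lt_range.filter _)]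
  congr 1
  apply List.map_congr_left
  intro j hj
  have hcard : (((List.range n).filter (fun j => decide ((n - 1 - k, j) ∈ Rothe v))).filter
      (fun i => decide (i ≤ j))).length
      = ((Rothe v).filter (fun b' => b'.1 = n - 1 - k ∧ b'.2 ≤ j)).card := by
    rw [← List.toFinset_card_of_nodup ((List.nodup_range.filter _).filter _)]
    apply Finset.card_bij (fun i _ => (n - 1 - k, i))
    · intro i hi
      simp only [List.mem_toFinset, List.mem_filter, decide_eq_true_eq] at hi
      exact Finset.mem_filter.2 ⟨hi.1.2, rfl, hi.2⟩
    · intro a _ b _ e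
      simpa using e
    · rintro ⟨a, b⟩ hb
      simp only [Finset.mem_filter] at hb
      obtain ⟨hb1, rfl, hb3⟩ := hb
      refine ⟨b, ?_, rfl⟩
      simp only [List.mem_toFinset, List.mem_filter, List.mem_range, decide_eq_true_eq]
      exact ⟨⟨((hmem b).1 hb1).1, hb1⟩, hb3⟩
  rw [hcard, show n - (n - 1 - k) = k + 1 by omega]
  rfl

/-- Theorem 4.5, Grothendieck case: the Buch–Rimányi specialization
formula. The double Grothendieck polynomial `𝔊_{w₀w}` evaluated at `x_j = t_{v(j)}`,
`y_i = t_{n-i+1}` (FK pipe dream formula) equals the analogous sum over pipe dreams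
on the Rothe diagram `D(v)`. -/
theorem grothendieck_specialization (n : ℕ) (v w : Equiv.Perm (Fin n)) :
    (∑ P ∈ FKPipes ((longest : Equiv.Perm (Fin n)) * w),
        (-1 : LaurentField) ^ (P.card - invCount ((longest : Equiv.Perm (Fin n)) * w)) *
          ∏ b ∈ P, (1 - tv (permVal v b.2 + 1) / tv (n - b.1)))
      = ∑ P ∈ Pipes v ((longest : Equiv.Perm (Fin n)) * w),
          (-1 : LaurentField) ^ (P.card - invCount ((longest : Equiv.Perm (Fin n)) * w)) *
            ∏ b ∈ P, (1 - tv (permVal v b.2 + 1) / tv (n - b.1)) := by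
  have hS := pipe_sum_eq (n := n) fkLabel (fun b => tv (permVal v b.2 + 1) / tv (n - b.1))
    ((longest : Equiv.Perm (Fin n)) * w) (staircase n)
    (fun b hb => by simp [staircase] at hb; exact hb.1)
  have hR := pipe_sum_eq (n := n) (canonLabel v) (fun b => tv (permVal v b.2 + 1) / tv (n - b.1))
    ((longest : Equiv.Perm (Fin n)) * w) (Rothe v)
    (fun b hb => by simp [Rothe] at hb; exact hb.1)
  rw [rothe_prod v] at hR
  rw [staircase_prod (n := n) (fun j => tv (permVal v j + 1)), ← hR] at hS
  exact hS

end
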